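/- Let g: ℝ^d → [0,∞] be strictly convex with g(0)=0, g(z)>0 for z≠0, g(z)=∞ outside a compact ball, invertible Hessian V=∇²g(0), and suppose g(z) − ½ zᵀVz = o(|z|²) as z→0. Let Λ_h = ∫_{ℝ^d} exp(−g(z)/h) dz. Then lim_{h→0+} Λ_h/(2πh)^{d/2} = 1/√(det ∇²g(0)). -/

import Mathlib

/-!
The substitution `z = √h u` turns `Λ_h / h^{d/2}` into `∫ exp(-g(√h u)/h) du`, whose integrand
converges pointwise to `exp(-uᵀVu/2)` by the second-order expansion of `g` at the origin. That
expansion and the positivity of `V` make `g` grow at least quadratically near `0`, hence, by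
convexity along rays, at least linearly far away: `g z ≥ min (c‖z‖²) (a‖z‖)`. For `h ≤ 1` this bound
survives the rescaling and yields the integrable majorant `exp(-min (c‖u‖²) (a‖u‖))`. The limit
`∫ exp(-uᵀVu/2) du` is computed by writing `V = BᵀB` and changing variables by `B`.
Convexity also makes `g` almost everywhere measurable: it is continuous inside its effective domain,
constant outside the closure of it, and the frontier of a convex set is null.
-/

open MeasureTheory Real Filter Topology Metric

noncomputable section

/-- `exp(−t)` for `t ∈ [0,∞]`, with `exp(−∞) = 0`. -/
def expNeg (t : ENNReal) : ℝ := if t = ⊤ then 0 else Real.exp (-t.toReal)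

/-- The quadratic form `v ↦ vᵀ M v` of a matrix. -/
def quadForm {d : ℕ} (M : Matrix (Fin d) (Fin d) ℝ) (v : EuclideanSpace ℝ (Fin d)) : ℝ :=
  ∑ i, ∑ j, v i * M i j * v j

/-- The normalizing constant `Λ_h = ∫ exp(−g(z)/h) dz`. -/
def Lam {d : ℕ} (g : EuclideanSpace ℝ (Fin d) → ENNReal) (h : ℝ) : ℝ :=
  ∫ z, expNeg (g z / ENNReal.ofReal h)

lemma measurable_expNeg : Measurable expNeg :=
  Measurable.ite (measurableSet_singleton _) measurable_const
    (Real.measurable_exp.comp ENNReal.measurable_toReal.neg)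

lemma expNeg_nonneg (t : ENNReal) : 0 ≤ expNeg t := by
  unfold expNeg
  split_ifs <;> positivity

lemma expNeg_of_ne_top {t : ENNReal} (ht : t ≠ ⊤) : expNeg t = Real.exp (-t.toReal) := if_neg ht

lemma expNeg_le_exp {a : ℝ} {t : ENNReal} (hat : ENNReal.ofReal a ≤ t) :
    expNeg t ≤ Real.exp (-a) := by
  by_cases ht : t = ⊤
  · simpa [expNeg, ht] using (Real.exp_pos (-a)).le
  · rw [expNeg_of_ne_top ht, Real.exp_le_exp, neg_le_neg_iff]
    exact (ENNReal.ofReal_le_iff_le_toReal ht).1 hat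

section Convex

variable {E : Type*}

lemma ofReal_mul_le_apply_smul [AddCommGroup E] [Module ℝ E] {g : E → ENNReal}
    (hconv : ConvexOn ℝ {z | g z ≠ ⊤} fun z => (g z).toReal) (h0 : g 0 = 0)
    {s : ℝ} (hs : 1 ≤ s) (z : E) : ENNReal.ofReal s * g z ≤ g (s • z) := by
  by_cases htop : g (s • z) = ⊤
  · simp [htop]
  have hs0 : 0 < s := one_pos.trans_le hs
  have hcomb : s⁻¹ • s • z + (1 - s⁻¹) • (0 : E) = z := by
    rw [smul_zero, add_zero, inv_smul_smul₀ hs0.ne']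
  have hzero : (0 : E) ∈ {z | g z ≠ ⊤} := by simp [h0]
  have hinv : 0 ≤ 1 - s⁻¹ := sub_nonneg.2 (inv_le_one_of_one_le₀ hs)
  have hfin : g z ≠ ⊤ := by
    have := hconv.1 htop hzero (inv_nonneg.2 hs0.le) hinv (add_sub_cancel _ _)
    rwa [hcomb] at this
  have hle : (g z).toReal ≤ s⁻¹ * (g (s • z)).toReal := by
    have := hconv.2 htop hzero (inv_nonneg.2 hs0.le) hinv (add_sub_cancel _ _)
    simpa only [hcomb, h0, ENNReal.toReal_zero, smul_eq_mul, mul_zero, add_zero] using this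
  rw [← ENNReal.ofReal_toReal hfin, ← ENNReal.ofReal_mul hs0.le,
    ENNReal.ofReal_le_iff_le_toReal htop]
  exact (le_inv_mul_iff₀ hs0).1 hle

lemma ofReal_mul_norm_le_of_sq_le [NormedAddCommGroup E] [NormedSpace ℝ E] {g : E → ENNReal}
    (hconv : ConvexOn ℝ {z | g z ≠ ⊤} fun z => (g z).toReal) (h0 : g 0 = 0) {c r : ℝ} (hr : 0 < r)
    (hball : ∀ z, ‖z‖ ≤ r → ENNReal.ofReal (c * ‖z‖ ^ 2) ≤ g z) {z : E} (hz : r ≤ ‖z‖) :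
    ENNReal.ofReal (c * r * ‖z‖) ≤ g z := by
  have hz0 : 0 < ‖z‖ := hr.trans_le hz
  set w : E := (r / ‖z‖) • z with hw
  have hwz : (‖z‖ / r) • w = z := by
    rw [hw, smul_smul, div_mul_div_cancel₀ hr.ne', div_self hz0.ne', one_smul]
  have hwr : ‖w‖ = r := by
    rw [hw, norm_smul, Real.norm_of_nonneg (by positivity), div_mul_cancel₀ _ hz0.ne']
  calc ENNReal.ofReal (c * r * ‖z‖)
      = ENNReal.ofReal (‖z‖ / r) * ENNReal.ofReal (c * ‖w‖ ^ 2) := by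
        rw [← ENNReal.ofReal_mul (by positivity), hwr]
        congr 1
        field_simp
    _ ≤ ENNReal.ofReal (‖z‖ / r) * g w := by gcongr; exact hball w hwr.le
    _ ≤ g ((‖z‖ / r) • w) := ofReal_mul_le_apply_smul hconv h0 ((one_le_div hr).2 hz) w
    _ = g z := by rw [hwz]

lemma aemeasurable_of_convexOn_toReal [NormedAddCommGroup E] [NormedSpace ℝ E]
    [FiniteDimensional ℝ E] [MeasurableSpace E] [BorelSpace E] (μ : Measure E)
    [μ.IsAddHaarMeasure] {g : E → ENNReal}
    (hconv : ConvexOn ℝ {z | g z ≠ ⊤} fun z => (g z).toReal) : AEMeasurable g μ := by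
  set D : Set E := {z | g z ≠ ⊤}
  have hinterior : AEMeasurable g (μ.restrict (interior D)) :=
    (hconv.continuousOn_interior.aemeasurable measurableSet_interior).ennreal_ofReal.congr <|
      ae_restrict_of_forall_mem measurableSet_interior fun _ hz =>
        ENNReal.ofReal_toReal (interior_subset hz)
  have hexterior : AEMeasurable g (μ.restrict (closure D)ᶜ) :=
    aemeasurable_const.congr <|
      ae_restrict_of_forall_mem measurableSet_closure.compl fun _ hz =>
        (not_not.1 fun hfin => hz (subset_closure hfin)).symm
  have hfrontier : ∀ᵐ z ∂μ, z ∈ interior D ∪ (closure D)ᶜ := by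
    filter_upwards [measure_eq_zero_iff_ae_notMem.1 (hconv.1.addHaar_frontier μ)] with z hz
    by_contra hmem
    rw [Set.mem_union, not_or, Set.mem_compl_iff, not_not] at hmem
    exact hz ⟨hmem.2, hmem.1⟩
  rw [← Measure.restrict_eq_self_of_ae_mem hfrontier]
  exact aemeasurable_union_iff.2 ⟨hinterior, hexterior⟩

end Convex

/-- `g` is finite near the origin and agrees with `Q` there up to `o(‖z‖²)`; for
`g` with `g 0 = 0` and `∇g(0) = 0` this expresses that `Q z = ½ zᵀ∇²g(0)z`. -/
def HasQuadraticExpansion {E : Type*} [NormedAddCommGroup E] (g : E → ENNReal) (Q : E → ℝ) : Prop :=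
  (∀ᶠ z in 𝓝 0, g z ≠ ⊤) ∧ (fun z => (g z).toReal - Q z) =o[𝓝 0] fun z => ‖z‖ ^ 2

section Scaling

variable {E : Type*} [NormedAddCommGroup E] [NormedSpace ℝ E]

lemma sq_norm_sqrt_smul {h : ℝ} (hh : 0 ≤ h) (u : E) : ‖√h • u‖ ^ 2 = h * ‖u‖ ^ 2 := by
  rw [norm_smul, mul_pow, Real.norm_of_nonneg (Real.sqrt_nonneg h), Real.sq_sqrt hh]

lemma tendsto_sqrt_smul_zero (u : E) : Tendsto (fun h : ℝ => √h • u) (𝓝[>] 0) (𝓝 0) := by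
  have hcont : Continuous fun h : ℝ => √h • u := by fun_prop
  simpa using (hcont.tendsto 0).mono_left nhdsWithin_le_nhds

end Scaling

section Expansion

variable {E : Type*} [NormedAddCommGroup E] {g : E → ENNReal} {Q : E → ℝ}

lemma hasQuadraticExpansion_iff :
    HasQuadraticExpansion g Q ↔ ∀ ε > 0, ∃ δ > 0, ∀ z, ‖z‖ < δ →
      g z ≠ ⊤ ∧ |(g z).toReal - Q z| ≤ ε * ‖z‖ ^ 2 := by
  have hiff (p : E → Prop) : (∀ᶠ z in 𝓝 0, p z) ↔ ∃ δ > 0, ∀ z, ‖z‖ < δ → p z := by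
    simp only [Metric.eventually_nhds_iff, dist_zero_right]
  simp only [HasQuadraticExpansion, Asymptotics.isLittleO_iff, Real.norm_eq_abs,
    abs_of_nonneg (sq_nonneg ‖(_ : E)‖), ← hiff, eventually_and]
  exact ⟨fun h ε hε => ⟨h.1, h.2 hε⟩, fun h => ⟨(h 1 one_pos).1, fun ε hε => (h ε hε).2⟩⟩

namespace HasQuadraticExpansion

lemma map_zero (hg : HasQuadraticExpansion g Q) (hQ : Q 0 = 0) : g 0 = 0 := by
  obtain ⟨δ, hδ, hloc⟩ := hasQuadraticExpansion_iff.1 hg 1 one_pos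
  obtain ⟨hfin, hle⟩ := hloc 0 (by simpa using hδ)
  have hzero : (g 0).toReal = 0 := le_antisymm (by simpa [hQ] using hle) ENNReal.toReal_nonneg
  exact (ENNReal.toReal_eq_zero_iff _).1 hzero |>.resolve_right hfin

lemma eventually_ofReal_mul_sq_norm_le (hg : HasQuadraticExpansion g Q) {c c' : ℝ} (hc : c' < c)
    (hQ : ∀ z, c * ‖z‖ ^ 2 ≤ Q z) : ∀ᶠ z in 𝓝 0, ENNReal.ofReal (c' * ‖z‖ ^ 2) ≤ g z := by
  filter_upwards [hg.1, hg.2.def (sub_pos.2 hc)] with z hfin hz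
  rw [ENNReal.ofReal_le_iff_le_toReal hfin]
  rw [Real.norm_eq_abs, norm_pow, norm_norm] at hz
  linarith [(abs_le.1 hz).1, hQ z]

variable [NormedSpace ℝ E]

lemma exists_ofReal_min_le (hg : HasQuadraticExpansion g Q)
    (hconv : ConvexOn ℝ {z | g z ≠ ⊤} fun z => (g z).toReal) (hQ0 : Q 0 = 0)
    {c : ℝ} (hc : 0 < c) (hQ : ∀ z, c * ‖z‖ ^ 2 ≤ Q z) :
    ∃ b > 0, ∃ a > 0, ∀ z, ENNReal.ofReal (min (b * ‖z‖ ^ 2) (a * ‖z‖)) ≤ g z := by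
  obtain ⟨r, hr, hball⟩ := Metric.nhds_basis_closedBall.eventually_iff.1
    (hg.eventually_ofReal_mul_sq_norm_le (half_lt_self hc) hQ)
  simp only [mem_closedBall_zero_iff] at hball
  refine ⟨c / 2, by positivity, c / 2 * r, by positivity, fun z => ?_⟩
  rcases le_total ‖z‖ r with hz | hz
  · exact (ENNReal.ofReal_le_ofReal (min_le_left _ _)).trans (hball hz)
  · exact (ENNReal.ofReal_le_ofReal (min_le_right _ _)).trans
      (ofReal_mul_norm_le_of_sq_le hconv (hg.map_zero hQ0) hr (fun _ hw => hball hw) hz)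

lemma tendsto_toReal_div (hg : HasQuadraticExpansion g Q)
    (hQ : ∀ (t : ℝ) z, Q (t • z) = t ^ 2 * Q z) (u : E) :
    Tendsto (fun h : ℝ => (g (√h • u)).toReal / h) (𝓝[>] 0) (𝓝 (Q u)) := by
  have hremainder : (fun h : ℝ => (g (√h • u)).toReal - Q (√h • u)) =o[𝓝[>] 0] fun h => h := by
    refine (hg.2.comp_tendsto (tendsto_sqrt_smul_zero u)).trans_isBigO ?_
    refine Asymptotics.IsBigO.of_bound (‖u‖ ^ 2) ?_
    filter_upwards [self_mem_nhdsWithin] with h (hh : 0 < h)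
    rw [Function.comp_apply, sq_norm_sqrt_smul hh.le, norm_mul, norm_pow, norm_norm, mul_comm]
  have hlim := hremainder.tendsto_div_nhds_zero.add_const (Q u)
  rw [zero_add] at hlim
  refine hlim.congr' ?_
  filter_upwards [self_mem_nhdsWithin] with h (hh : 0 < h)
  rw [hQ, Real.sq_sqrt hh.le, sub_div, mul_div_cancel_left₀ _ hh.ne', sub_add_cancel]

lemma tendsto_expNeg (hg : HasQuadraticExpansion g Q)
    (hQ : ∀ (t : ℝ) z, Q (t • z) = t ^ 2 * Q z) (u : E) :
    Tendsto (fun h : ℝ => expNeg (g (√h • u) / ENNReal.ofReal h)) (𝓝[>] 0)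
      (𝓝 (Real.exp (-Q u))) := by
  refine ((Real.continuous_exp.tendsto _).comp (hg.tendsto_toReal_div hQ u).neg).congr' ?_
  filter_upwards [(tendsto_sqrt_smul_zero u).eventually hg.1, self_mem_nhdsWithin]
    with h hfin (hh : 0 < h)
  rw [expNeg_of_ne_top (ENNReal.div_ne_top hfin (ENNReal.ofReal_pos.2 hh).ne'),
    ENNReal.toReal_div, ENNReal.toReal_ofReal hh.le, Function.comp_apply]

end HasQuadraticExpansion

end Expansion

section Laplace

variable {E : Type*} [NormedAddCommGroup E] [NormedSpace ℝ E] {g : E → ENNReal} {a b : ℝ}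

lemma expNeg_div_le_exp_neg_min
    (hgrowth : ∀ z, ENNReal.ofReal (min (b * ‖z‖ ^ 2) (a * ‖z‖)) ≤ g z) (ha : 0 ≤ a)
    {h : ℝ} (hh : 0 < h) (hh1 : h ≤ 1) (u : E) :
    expNeg (g (√h • u) / ENNReal.ofReal h) ≤ Real.exp (-min (b * ‖u‖ ^ 2) (a * ‖u‖)) := by
  have hsqrt : h ≤ √h := Real.le_sqrt_of_sq_le (by nlinarith)
  refine expNeg_le_exp ?_
  rw [ENNReal.le_div_iff_mul_le (Or.inl (ENNReal.ofReal_pos.2 hh).ne')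
      (Or.inl ENNReal.ofReal_ne_top),
    ← ENNReal.ofReal_mul' hh.le]
  refine (ENNReal.ofReal_le_ofReal ?_).trans (hgrowth (√h • u))
  calc min (b * ‖u‖ ^ 2) (a * ‖u‖) * h
      = min (b * (h * ‖u‖ ^ 2)) (h * (a * ‖u‖)) := by
        rw [min_mul_of_nonneg _ _ hh.le]
        ring_nf
    _ ≤ min (b * (h * ‖u‖ ^ 2)) (√h * (a * ‖u‖)) := by gcongr
    _ = min (b * ‖√h • u‖ ^ 2) (a * ‖√h • u‖) := by
        rw [sq_norm_sqrt_smul hh.le, norm_smul, Real.norm_of_nonneg (Real.sqrt_nonneg h),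
          mul_left_comm √h]

variable [FiniteDimensional ℝ E] [MeasurableSpace E] [BorelSpace E] (μ : Measure E)
  [μ.IsAddHaarMeasure]

lemma integrable_exp_neg_mul_norm (ha : 0 < a) :
    Integrable (fun u : E => Real.exp (-(a * ‖u‖))) μ := by
  set n : ℕ := Module.finrank ℝ E + 1 with hn
  have hjapanese : Integrable (fun u : E => (1 + ‖u‖) ^ (-(n : ℝ))) μ :=
    integrable_one_add_norm (by rw [hn]; push_cast; exact lt_add_one _)
  refine (hjapanese.const_mul (Real.exp a * n.factorial / a ^ n)).mono'
    (by fun_prop) (ae_of_all _ fun u => ?_)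
  have hpos : 0 < 1 + ‖u‖ := by positivity
  have hpow : a ^ n * (1 + ‖u‖) ^ n / n.factorial ≤ Real.exp a * Real.exp (a * ‖u‖) := by
    rw [← mul_pow, ← Real.exp_add, ← mul_one_add]
    exact Real.pow_div_factorial_le_exp _ (mul_nonneg ha.le hpos.le) n
  rw [Real.norm_of_nonneg (Real.exp_pos _).le, Real.rpow_neg hpos.le, Real.rpow_natCast,
    Real.exp_neg]
  field_simp at hpow ⊢
  linarith

lemma integrable_exp_neg_min (ha : 0 < a) (hb : 0 < b) :
    Integrable (fun u : E => Real.exp (-min (b * ‖u‖ ^ 2) (a * ‖u‖))) μ := by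
  refine ((integrable_exp_neg_mul_norm μ ha).const_mul (Real.exp (a ^ 2 / (4 * b)))).mono'
    (by fun_prop) (ae_of_all _ fun u => ?_)
  rw [Real.norm_of_nonneg (Real.exp_pos _).le, ← Real.exp_add, Real.exp_le_exp]
  have hshift : 0 ≤ a ^ 2 / (4 * b) := by positivity
  have hsquare : a * ‖u‖ - a ^ 2 / (4 * b) ≤ b * ‖u‖ ^ 2 := by
    rw [sub_le_iff_le_add, ← sub_nonneg]
    calc (0 : ℝ) ≤ (2 * b * ‖u‖ - a) ^ 2 / (4 * b) := by positivity
      _ = b * ‖u‖ ^ 2 + a ^ 2 / (4 * b) - a * ‖u‖ := by field_simp; ring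
  have hmin : a * ‖u‖ - a ^ 2 / (4 * b) ≤ min (b * ‖u‖ ^ 2) (a * ‖u‖) :=
    le_min hsquare (sub_le_self _ hshift)
  linarith

lemma integral_div_rpow_eq_integral_comp_sqrt_smul (f : E → ℝ) {h : ℝ} (hh : 0 < h) :
    (∫ z, f z ∂μ) / h ^ ((Module.finrank ℝ E : ℝ) / 2) = ∫ u, f (√h • u) ∂μ := by
  rw [Measure.integral_comp_smul_of_nonneg μ f (√h) (hR := Real.sqrt_nonneg h), smul_eq_mul,
    inv_mul_eq_div, Real.sqrt_eq_rpow, ← Real.rpow_natCast, ← Real.rpow_mul hh.le,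
    one_div_mul_eq_div]

theorem HasQuadraticExpansion.tendsto_integral_expNeg_div_rpow {Q : E → ℝ}
    (hg : HasQuadraticExpansion g Q) (hmeas : AEMeasurable g μ)
    (hQ : ∀ (t : ℝ) z, Q (t • z) = t ^ 2 * Q z) (ha : 0 < a) (hb : 0 < b)
    (hgrowth : ∀ z, ENNReal.ofReal (min (b * ‖z‖ ^ 2) (a * ‖z‖)) ≤ g z) :
    Tendsto (fun h : ℝ => (∫ z, expNeg (g z / ENNReal.ofReal h) ∂μ) /
      h ^ ((Module.finrank ℝ E : ℝ) / 2)) (𝓝[>] 0) (𝓝 (∫ u, Real.exp (-Q u) ∂μ)) := by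
  have hrescaled : Tendsto (fun h : ℝ => ∫ u, expNeg (g (√h • u) / ENNReal.ofReal h) ∂μ) (𝓝[>] 0)
      (𝓝 (∫ u, Real.exp (-Q u) ∂μ)) := by
    refine tendsto_integral_filter_of_dominated_convergence _ ?_ ?_
      (integrable_exp_neg_min μ ha hb) (ae_of_all _ (hg.tendsto_expNeg hQ))
    · filter_upwards [self_mem_nhdsWithin] with h (hh : 0 < h)
      have hcomp := hmeas.comp_quasiMeasurePreserving
        (Measure.quasiMeasurePreserving_smul μ (Real.sqrt_pos.2 hh).ne')
      exact (measurable_expNeg.comp_aemeasurable (hcomp.div_const _)).aestronglyMeasurable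
    · filter_upwards [Ioc_mem_nhdsGT one_pos] with h hh
      refine ae_of_all _ fun u => ?_
      rw [Real.norm_of_nonneg (expNeg_nonneg _)]
      exact expNeg_div_le_exp_neg_min hgrowth ha.le hh.1 hh.2 u
  refine hrescaled.congr' ?_
  filter_upwards [self_mem_nhdsWithin] with h (hh : 0 < h)
  rw [integral_div_rpow_eq_integral_comp_sqrt_smul μ _ hh]

end Laplace

lemma exists_pos_mul_sq_norm_le {E : Type*} [NormedAddCommGroup E] [NormedSpace ℝ E]
    [FiniteDimensional ℝ E] {Q : E → ℝ} (hcont : Continuous Q)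
    (hQ : ∀ (t : ℝ) z, Q (t • z) = t ^ 2 * Q z) (hpos : ∀ z, z ≠ 0 → 0 < Q z) :
    ∃ c > 0, ∀ z, c * ‖z‖ ^ 2 ≤ Q z := by
  have : ProperSpace E := FiniteDimensional.proper ℝ E
  obtain ⟨c, hc, hsphere⟩ := (isCompact_sphere (0 : E) 1).exists_forall_le' hcont.continuousOn
    fun z hz => hpos z (ne_zero_of_mem_unit_sphere ⟨z, hz⟩)
  refine ⟨c, hc, fun z => ?_⟩
  rcases eq_or_ne z 0 with rfl | hz
  · simpa using (hQ 0 0).ge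
  have hunit := hsphere (‖z‖⁻¹ • z) (by simp [norm_smul, hz])
  rwa [hQ, inv_pow, le_inv_mul_iff₀ (by positivity), mul_comm] at hunit

section Gaussian

lemma integral_exp_neg_mul_sq_norm_linearMap {E : Type*} [NormedAddCommGroup E]
    [InnerProductSpace ℝ E] [FiniteDimensional ℝ E] [MeasurableSpace E] [BorelSpace E]
    {L : E →ₗ[ℝ] E} (hL : LinearMap.det L ≠ 0) {b : ℝ} (hb : 0 < b) :
    ∫ u, Real.exp (-b * ‖L u‖ ^ 2) =
      (π / b) ^ ((Module.finrank ℝ E : ℝ) / 2) / |LinearMap.det L| := by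
  have hcont : Continuous L := L.continuous_of_finiteDimensional
  calc ∫ u, Real.exp (-b * ‖L u‖ ^ 2)
      = ∫ v, Real.exp (-b * ‖v‖ ^ 2) ∂(volume.map L) :=
        (integral_map (f := fun v => Real.exp (-b * ‖v‖ ^ 2)) hcont.aemeasurable
          (by fun_prop)).symm
    _ = |LinearMap.det L|⁻¹ * (π / b) ^ ((Module.finrank ℝ E : ℝ) / 2) := by
        rw [Measure.map_linearMap_addHaar_eq_smul_addHaar volume hL, integral_smul_measure,
          GaussianFourier.integral_rexp_neg_mul_sq_norm hb, ENNReal.toReal_ofReal (abs_nonneg _),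
          abs_inv, smul_eq_mul]
    _ = (π / b) ^ ((Module.finrank ℝ E : ℝ) / 2) / |LinearMap.det L| := inv_mul_eq_div _ _

variable {d : ℕ} {V : Matrix (Fin d) (Fin d) ℝ}

lemma quadForm_eq_dotProduct_mulVec (M : Matrix (Fin d) (Fin d) ℝ)
    (z : EuclideanSpace ℝ (Fin d)) : quadForm M z = z.ofLp ⬝ᵥ M.mulVec z.ofLp := by
  simp only [quadForm, dotProduct, Matrix.mulVec, Finset.mul_sum, mul_assoc]

lemma quadForm_smul (M : Matrix (Fin d) (Fin d) ℝ) (t : ℝ) (z : EuclideanSpace ℝ (Fin d)) :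
    quadForm M (t • z) = t ^ 2 * quadForm M z := by
  simp only [quadForm_eq_dotProduct_mulVec, WithLp.ofLp_smul, Matrix.mulVec_smul, smul_dotProduct,
    dotProduct_smul, smul_eq_mul, sq, mul_assoc]

lemma continuous_quadForm (M : Matrix (Fin d) (Fin d) ℝ) : Continuous (quadForm M) := by
  unfold quadForm
  fun_prop

lemma quadForm_pos (hV : V.PosDef) {z : EuclideanSpace ℝ (Fin d)} (hz : z ≠ 0) :
    0 < quadForm V z := by
  rw [quadForm_eq_dotProduct_mulVec]
  simpa using hV.dotProduct_mulVec_pos ((WithLp.ofLp_eq_zero 2).not.2 hz)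

lemma quadForm_transpose_mul_self (B : Matrix (Fin d) (Fin d) ℝ)
    (z : EuclideanSpace ℝ (Fin d)) :
    quadForm (B.transpose * B) z = ‖Matrix.toLpLin 2 2 B z‖ ^ 2 := by
  rw [quadForm_eq_dotProduct_mulVec, ← Matrix.mulVec_mulVec, Matrix.dotProduct_mulVec,
    Matrix.vecMul_transpose, EuclideanSpace.norm_sq_eq]
  simp only [dotProduct, Matrix.toLpLin_apply, Real.norm_eq_abs, sq_abs, ← sq]

open scoped MatrixOrder Matrix.Norms.L2Operator in
lemma exists_eq_transpose_mul_self {n : Type*} [Fintype n] {M : Matrix n n ℝ}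
    (hM : M.PosSemidef) : ∃ B : Matrix n n ℝ, M = B.transpose * B := by
  classical
  obtain ⟨B, hB⟩ := CStarAlgebra.nonneg_iff_eq_star_mul_self.mp hM.nonneg
  rw [Matrix.star_eq_conjTranspose, Matrix.conjTranspose_eq_transpose_of_trivial] at hB
  exact ⟨B, hB⟩

lemma integral_exp_neg_mul_quadForm (hV : V.PosDef) {b : ℝ} (hb : 0 < b) :
    ∫ u, Real.exp (-(b * quadForm V u)) = (π / b) ^ ((d : ℝ) / 2) / √V.det := by
  obtain ⟨B, rfl⟩ := exists_eq_transpose_mul_self hV.posSemidef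
  have hdet : (B.transpose * B).det = B.det ^ 2 := by
    rw [Matrix.det_mul, Matrix.det_transpose, sq]
  have hB : LinearMap.det (Matrix.toLpLin 2 2 B) ≠ 0 := by
    rw [LinearMap.det_toLpLin]
    exact (pow_ne_zero_iff two_ne_zero).1 (hdet ▸ hV.det_pos.ne')
  simp only [quadForm_transpose_mul_self, ← neg_mul]
  rw [integral_exp_neg_mul_sq_norm_linearMap hB hb, finrank_euclideanSpace_fin,
    LinearMap.det_toLpLin, hdet, Real.sqrt_sq_eq_abs]

end Gaussian

theorem laplace_asymptotics_normalizing_constant_general {d : ℕ}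
    {g : EuclideanSpace ℝ (Fin d) → ENNReal}
    (hgconv : ConvexOn ℝ {z | g z ≠ ⊤} fun z => (g z).toReal)
    {V : Matrix (Fin d) (Fin d) ℝ} (hV : V.PosDef)
    (hgV : HasQuadraticExpansion g fun z => (1 / 2) * quadForm V z) :
    Tendsto (fun h : ℝ => Lam g h / (2 * π * h) ^ ((d : ℝ) / 2)) (𝓝[>] (0 : ℝ))
      (𝓝 (1 / Real.sqrt V.det)) := by
  have hQ (t : ℝ) (z : EuclideanSpace ℝ (Fin d)) :
      1 / 2 * quadForm V (t • z) = t ^ 2 * (1 / 2 * quadForm V z) := by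
    rw [quadForm_smul, mul_left_comm]
  obtain ⟨c, hc, hcoercive⟩ := exists_pos_mul_sq_norm_le ((continuous_quadForm V).const_mul (1 / 2))
    hQ fun z hz => mul_pos one_half_pos (quadForm_pos hV hz)
  obtain ⟨b, hb, a, ha, hgrowth⟩ :=
    hgV.exists_ofReal_min_le hgconv (by simpa using hQ 0 0) hc hcoercive
  have hlaplace := hgV.tendsto_integral_expNeg_div_rpow volume
    (aemeasurable_of_convexOn_toReal volume hgconv) hQ ha hb hgrowth
  rw [integral_exp_neg_mul_quadForm hV one_half_pos, finrank_euclideanSpace_fin] at hlaplace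
  have hscale : (0 : ℝ) < (2 * π) ^ ((d : ℝ) / 2) := by positivity
  have hlim := hlaplace.div_const ((2 * π) ^ ((d : ℝ) / 2))
  rw [div_div_eq_mul_div, div_one, mul_comm π, div_right_comm, div_self hscale.ne'] at hlim
  refine hlim.congr' ?_
  filter_upwards [self_mem_nhdsWithin] with h (hh : 0 < h)
  rw [Lam, Real.mul_rpow (by positivity) hh.le, div_div, mul_comm (h ^ _)]

/-- Lemma 1(i): Laplace asymptotics `Λ_h/(2πh)^{d/2} → 1/√(det ∇²g(0))` as `h → 0+`. -/
theorem laplace_asymptotics_normalizing_constant (d : ℕ) (hd : 1 ≤ d)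
    (g : EuclideanSpace ℝ (Fin d) → ENNReal) (hgmeas : Measurable g)
    (hg0 : g 0 = 0) (hgpos : ∀ z, z ≠ 0 → 0 < g z)
    (hgconv : StrictConvexOn ℝ {z | g z ≠ ⊤} fun z => (g z).toReal)
    (R : ℝ) (hR : 0 < R) (hgtop : ∀ z : EuclideanSpace ℝ (Fin d), R < ‖z‖ → g z = ⊤)
    (V : Matrix (Fin d) (Fin d) ℝ) (hV : V.PosDef)
    (hgV : ∀ ε > 0, ∃ δ > 0, ∀ z : EuclideanSpace ℝ (Fin d), ‖z‖ < δ →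
      g z ≠ ⊤ ∧ |(g z).toReal - (1/2) * quadForm V z| ≤ ε * ‖z‖ ^ 2) :
    Tendsto (fun h : ℝ => Lam g h / (2 * π * h) ^ ((d : ℝ)/2)) (𝓝[>] (0:ℝ))
      (𝓝 (1 / Real.sqrt V.det)) :=
  laplace_asymptotics_normalizing_constant_general hgconv.convexOn hV
    (hasQuadraticExpansion_iff.2 hgV)
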